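/- Let m ≥ n and let C ⊆ F_{q^m}^n be a nonzero linear code. Then M_{R,i}(C,{0}) ≤ (n − dim C) + i for all 1 ≤ i ≤ dim C, and equality holds for all such i if and only if C is an MRD code (i.e., d_R(C) = n − dim C + 1). -/

import Mathlib

open scoped BigOperators

noncomputable section

variable (q : ℕ) (Fq : Type*) {Fqm : Type*} [Field Fq] [Field Fqm] [Algebra Fq Fqm]

/-- `V = V^q`: the image of `V` under the coordinatewise `q`-th power map equals `V`
(membership in the family `Γ(F_{q^m}^n)`). -/
def IsGalClosed {n : ℕ} (V : Submodule Fqm (Fin n → Fqm)) : Prop :=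
  (fun v : Fin n → Fqm => fun i => v i ^ q) '' (V : Set (Fin n → Fqm)) =
    (V : Set (Fin n → Fqm))

/-- The `i`-th relative dimension/intersection profile (RDIP) of `C1` and `C2`. -/
noncomputable def RDIP {n : ℕ} (C1 C2 : Submodule Fqm (Fin n → Fqm)) (i : ℕ) : ℕ :=
  sSup {d : ℕ | ∃ V : Submodule Fqm (Fin n → Fqm), IsGalClosed q V ∧
    Module.finrank Fqm ↥V = i ∧
    d = Module.finrank Fqm ↥(C1 ⊓ V) - Module.finrank Fqm ↥(C2 ⊓ V)}

/-- The `i`-th relative generalized rank weight (RGRW) of `C1` and `C2`. -/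
noncomputable def RGRW {n : ℕ} (C1 C2 : Submodule Fqm (Fin n → Fqm)) (i : ℕ) : ℕ :=
  sInf {d : ℕ | ∃ V : Submodule Fqm (Fin n → Fqm), IsGalClosed q V ∧
    d = Module.finrank Fqm ↥V ∧
    i ≤ Module.finrank Fqm ↥(C1 ⊓ V) - Module.finrank Fqm ↥(C2 ⊓ V)}

/-- The rank weight `d_R(x,0)` of a vector: the `F_q`-dimension of the `F_q`-span of
its coordinates. -/
noncomputable def rankWeight {ι : Type*} (x : ι → Fqm) : ℕ :=
  Module.finrank Fq ↥(Submodule.span Fq (Set.range x))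

/-- The minimum rank distance of a (nonzero) linear code. -/
noncomputable def minRankDist {ι : Type*} (C : Submodule Fqm (ι → Fqm)) : ℕ :=
  sInf {d : ℕ | ∃ x, x ∈ C ∧ x ≠ 0 ∧ d = rankWeight Fq x}

/-- The dual code with respect to the standard bilinear form `⟨x,y⟩ = ∑ i, x i * y i`. -/
def dualCode {n : ℕ} (V : Submodule Fqm (Fin n → Fqm)) : Submodule Fqm (Fin n → Fqm) where
  carrier := {x | ∀ v ∈ V, ∑ i, x i * v i = 0}
  add_mem' := by
    intro a b ha hb v hv
    have h1 := ha v hv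
    have h2 := hb v hv
    simp only [Set.mem_setOf_eq] at *
    simp only [Pi.add_apply, add_mul]
    rw [Finset.sum_add_distrib, h1, h2, add_zero]
  zero_mem' := by
    intro v hv
    simp
  smul_mem' := by
    intro c x hx v hv
    have h := hx v hv
    simp only [Set.mem_setOf_eq] at *
    simp only [Pi.smul_apply, smul_eq_mul, mul_assoc]
    rw [← Finset.mul_sum, h, mul_zero]

/-! A Frobenius-closed subspace `V` has a basis with coordinates in `F_q` (Galois descent), so it
has Frobenius-closed subspaces of every smaller dimension. Passing to one of codimension `j` lowers
`dim (C1 ∩ V) - dim (C2 ∩ V)` by at most `j`, whence `M_{R,i} + j ≤ M_{R,i+j}`. Together with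
`M_{R,dim C}(C, 0) ≤ n` this gives the Singleton bounds.
The smallest Frobenius-closed subspace containing `x` has dimension `d_R(x, 0)`, so
`M_{R,1}(C, 0) = d_R(C)`. Hence `C` is MRD exactly when the bound is attained at `i = 1`, and then
`M_{R,1} + (i - 1) ≤ M_{R,i}` forces equality for every `i`. -/

section LinearAlgebra

variable {k E : Type*} [Field k] [AddCommGroup E] [Module k E]

theorem exists_submodule_le_finrank_eq {W : Submodule k E} {d : ℕ}
    (hd : d ≤ Module.finrank k W) : ∃ W' ≤ W, Module.finrank k W' = d := by
  obtain ⟨f, hf⟩ := exists_linearIndependent_of_le_finrank hd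
  refine ⟨Submodule.span k (Set.range (W.subtype ∘ f)), ?_, ?_⟩
  · rw [Submodule.span_le]
    rintro _ ⟨l, rfl⟩
    exact (f l).2
  · rw [finrank_span_eq_card (hf.map' W.subtype W.ker_subtype), Fintype.card_fin]

theorem finrank_inf_add_finrank_le_of_le (C : Submodule k E) {V' V : Submodule k E}
    [FiniteDimensional k V] (h : V' ≤ V) :
    Module.finrank k ↥(C ⊓ V) + Module.finrank k V' ≤
      Module.finrank k ↥(C ⊓ V') + Module.finrank k V := by
  have : FiniteDimensional k V' := Submodule.finiteDimensional_of_le h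
  have hinf : C ⊓ V ⊓ V' = C ⊓ V' := by rw [inf_assoc, inf_eq_right.mpr h]
  have hsup : Module.finrank k ↥(C ⊓ V ⊔ V') ≤ Module.finrank k V :=
    Submodule.finrank_mono (sup_le inf_le_right h)
  have hdim := Submodule.finrank_sup_add_finrank_inf_eq (C ⊓ V) V'
  rw [hinf] at hdim
  omega

theorem exists_basis_repr_eq_apply {ι : Type*} [Finite ι] (V : Submodule k (ι → k)) :
    ∃ (s : Set ι) (b : Module.Basis s k V),
      ∀ (v : V) (j : s), b.repr v j = (v : ι → k) j := by
  -- The coordinate functions separate the points of `V`, so they span its dual; the basis of `V`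
  -- is the predual of a basis of `Dual V` chosen among them.
  let coordinate (i : ι) : Module.Dual k V := LinearMap.proj i ∘ₗ V.subtype
  have hspan : ⊤ ≤ Submodule.span k (Set.range coordinate) := by
    intro f _
    refine mem_span_of_iInf_ker_le_ker fun v hv => ?_
    have hv0 : v = 0 := Subtype.ext (funext fun i => (Submodule.mem_iInf _).1 hv i)
    rw [hv0]
    exact zero_mem _
  obtain ⟨s, -, -, hs_span, hli⟩ := exists_linearIndepOn_extension
    (linearIndepOn_empty k coordinate) (Set.empty_subset Set.univ)
  classical
  rw [Set.image_univ, Set.image_eq_range] at hs_span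
  let c : Module.Basis s k (Module.Dual k V) :=
    .mk hli (hspan.trans (Submodule.span_le.mpr hs_span))
  let b : Module.Basis s k V := c.dualBasis.map (Module.evalEquiv k V).symm
  have hcb (i j : s) : coordinate j (b i) = if j = i then 1 else 0 :=
    calc coordinate j (b i) = c.dualBasis i (coordinate j) :=
          Module.apply_evalEquiv_symm_apply k V _ _
      _ = c.dualBasis i (c j) := congrArg _ (Module.Basis.mk_apply hli _ j).symm
      _ = if j = i then 1 else 0 := c.dualBasis_apply_self i j
  refine ⟨s, b, fun v j => ?_⟩
  have hcoord : b.coord j = coordinate j := b.ext fun i => by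
    rw [hcb, b.coord_apply, b.repr_self, Finsupp.single_apply]
    simp only [eq_comm]
  exact LinearMap.congr_fun hcoord v

end LinearAlgebra

section RationalSpan

variable {Fq} {ι : Type*}

variable (Fqm) in
/-- The extension of scalars of an `F_q`-subspace of `F_q^ι`, as a subspace of `F_{q^m}^ι`.
These are the subspaces of `F_{q^m}^ι` that have a basis of vectors with entries in `F_q`. -/
def rationalSpan (W : Submodule Fq (ι → Fq)) : Submodule Fqm (ι → Fqm) :=
  Submodule.span Fqm ((fun w => algebraMap Fq Fqm ∘ w) '' (W : Set (ι → Fq)))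

theorem algebraMap_comp_mem_rationalSpan {W : Submodule Fq (ι → Fq)} {w : ι → Fq} (hw : w ∈ W) :
    algebraMap Fq Fqm ∘ w ∈ rationalSpan Fqm W :=
  Submodule.subset_span ⟨w, hw, rfl⟩

theorem rationalSpan_mono {W W' : Submodule Fq (ι → Fq)} (h : W ≤ W') :
    rationalSpan Fqm W ≤ rationalSpan Fqm W' :=
  Submodule.span_mono (Set.image_mono h)

theorem rationalSpan_eq_span_basis {κ : Type*} {W : Submodule Fq (ι → Fq)}
    (b : Module.Basis κ Fq W) :
    rationalSpan Fqm W =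
      Submodule.span Fqm (Set.range fun l => algebraMap Fq Fqm ∘ (b l : ι → Fq)) := by
  refine le_antisymm (Submodule.span_le.mpr ?_) (Submodule.span_le.mpr ?_)
  · rintro _ ⟨w, hw, rfl⟩
    have hw' : w ∈ Submodule.span Fq (Set.range (W.subtype ∘ b)) := by
      rw [Set.range_comp, Submodule.span_image, b.span_eq, Submodule.map_subtype_top]
      exact hw
    have := Submodule.mem_map_of_mem (f := Pi.algebraMap ι Fq Fqm) hw'
    rw [Submodule.map_span, ← Set.range_comp] at this
    exact Submodule.span_le_restrictScalars Fq Fqm _ this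
  · rintro _ ⟨l, rfl⟩
    exact algebraMap_comp_mem_rationalSpan (b l).2

theorem finrank_rationalSpan [Finite ι] (W : Submodule Fq (ι → Fq)) :
    Module.finrank Fqm (rationalSpan Fqm W) = Module.finrank Fq W := by
  let b := Module.finBasis Fq W
  have hb : LinearIndependent Fq fun l => (b l : ι → Fq) :=
    b.linearIndependent.map' W.subtype W.ker_subtype
  rw [rationalSpan_eq_span_basis b,
    finrank_span_eq_card (linearIndependent_algebraMap_comp_iff.mpr hb), Fintype.card_fin]

theorem rationalSpan_top [Finite ι] : rationalSpan Fqm (⊤ : Submodule Fq (ι → Fq)) = ⊤ := by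
  have := Fintype.ofFinite ι
  apply Submodule.eq_top_of_finrank_eq
  rw [finrank_rationalSpan, finrank_top, Module.finrank_pi, Module.finrank_pi]

end RationalSpan

section RankWeight

variable {Fq} {ι : Type*}

theorem minRankDist_le_rankWeight {C : Submodule Fqm (ι → Fqm)} {x : ι → Fqm}
    (hx : x ∈ C) (hx0 : x ≠ 0) : minRankDist Fq C ≤ rankWeight Fq x :=
  Nat.sInf_le ⟨x, hx, hx0, rfl⟩

variable (Fq) in
theorem exists_rankWeight_eq_minRankDist {C : Submodule Fqm (ι → Fqm)} (hC : C ≠ ⊥) :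
    ∃ x ∈ C, x ≠ 0 ∧ rankWeight Fq x = minRankDist Fq C := by
  obtain ⟨y, hy, hy0⟩ := Submodule.exists_mem_ne_zero_of_ne_bot hC
  obtain ⟨x, hx, hx0, hmin⟩ := Nat.sInf_mem
    (s := {d : ℕ | ∃ x, x ∈ C ∧ x ≠ 0 ∧ d = rankWeight Fq x}) ⟨_, y, hy, hy0, rfl⟩
  exact ⟨x, hx, hx0, hmin.symm⟩

theorem rankWeight_le_finrank_of_mem_rationalSpan [Finite ι] {W : Submodule Fq (ι → Fq)}
    {x : ι → Fqm} (hx : x ∈ rationalSpan Fqm W) : rankWeight Fq x ≤ Module.finrank Fq W := by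
  let b := Module.finBasis Fq W
  rw [rationalSpan_eq_span_basis b, Submodule.mem_span_range_iff_exists_fun] at hx
  obtain ⟨a, rfl⟩ := hx
  have := FiniteDimensional.span_of_finite Fq (Set.finite_range a)
  have hle : Submodule.span Fq (Set.range (∑ l, a l • algebraMap Fq Fqm ∘ (b l : ι → Fq))) ≤
      Submodule.span Fq (Set.range a) := by
    rw [Submodule.span_le]
    rintro _ ⟨j, rfl⟩
    rw [Finset.sum_apply]
    refine Submodule.sum_mem _ fun l _ => ?_
    rw [Pi.smul_apply, Function.comp_apply, smul_eq_mul, mul_comm, ← Algebra.smul_def]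
    exact Submodule.smul_mem _ _ (Submodule.subset_span ⟨l, rfl⟩)
  calc rankWeight Fq _ ≤ Module.finrank Fq (Submodule.span Fq (Set.range a)) :=
        Submodule.finrank_mono hle
    _ ≤ Fintype.card (Fin (Module.finrank Fq W)) := finrank_range_le_card a
    _ = Module.finrank Fq W := Fintype.card_fin _

theorem exists_mem_rationalSpan_finrank_le_rankWeight [Finite ι] (x : ι → Fqm) :
    ∃ W : Submodule Fq (ι → Fq),
      x ∈ rationalSpan Fqm W ∧ Module.finrank Fq W ≤ rankWeight Fq x := by
  -- `W` is the row space of the matrix expanding the entries of `x` in an `F_q`-basis of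
  -- their span.
  let S := Submodule.span Fq (Set.range x)
  have : FiniteDimensional Fq S := FiniteDimensional.span_of_finite Fq (Set.finite_range x)
  let b := Module.finBasis Fq S
  let entry (j : ι) : S := ⟨x j, Submodule.subset_span ⟨j, rfl⟩⟩
  let row (l : Fin (Module.finrank Fq S)) (j : ι) : Fq := b.repr (entry j) l
  refine ⟨Submodule.span Fq (Set.range row), ?_, ?_⟩
  · have hx : x = ∑ l, (b l : Fqm) • algebraMap Fq Fqm ∘ row l := by
      ext j
      have hj := congrArg Subtype.val (b.sum_repr (entry j))
      rw [Submodule.coe_sum] at hj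
      rw [Finset.sum_apply, show x j = (entry j : Fqm) from rfl, ← hj]
      refine Finset.sum_congr rfl fun l _ => ?_
      rw [Submodule.coe_smul, Algebra.smul_def, mul_comm]
      rfl
    rw [hx]
    exact Submodule.sum_mem _ fun l _ => Submodule.smul_mem _ _
      (algebraMap_comp_mem_rationalSpan (Submodule.subset_span ⟨l, rfl⟩))
  · exact (finrank_range_le_card row).trans_eq (Fintype.card_fin _)

end RankWeight

section GaloisDescent

variable {Fq} [Fintype Fq]

theorem mem_range_algebraMap_of_pow_card_eq_self {c : Fqm} (hc : c ^ Fintype.card Fq = c) :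
    c ∈ (algebraMap Fq Fqm).range := by
  have hdeg := FiniteField.X_pow_card_sub_X_natDegree_eq Fq (Fintype.one_lt_card (α := Fq))
  have hsplits : (.X ^ Fintype.card Fq - .X : Polynomial Fq).Splits := by
    rw [Polynomial.splits_iff_card_roots, FiniteField.roots_X_pow_card_sub_X, hdeg]
    rfl
  refine hsplits.mem_range_of_isRoot
    (FiniteField.X_pow_card_sub_X_ne_zero Fq Fintype.one_lt_card) ?_
  simp [hc]

variable (Fq Fqm) in
/-- The coordinatewise `q`-th power map `v ↦ v^q`, bundled as a Frobenius-semilinear map so that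
`V^q` becomes `V.map (coordFrobenius Fq Fqm ι)`. -/
def coordFrobenius (ι : Type*) :
    (ι → Fqm) →ₛₗ[(FiniteField.frobeniusAlgHom Fq Fqm : Fqm →+* Fqm)] (ι → Fqm) where
  toFun v i := v i ^ Fintype.card Fq
  map_add' u v := funext fun i => map_add (FiniteField.frobeniusAlgHom Fq Fqm) (u i) (v i)
  map_smul' c v := funext fun i => map_mul (FiniteField.frobeniusAlgHom Fq Fqm) c (v i)

theorem coordFrobenius_algebraMap_comp {ι : Type*} (w : ι → Fq) :
    coordFrobenius Fq Fqm ι (algebraMap Fq Fqm ∘ w) = algebraMap Fq Fqm ∘ w :=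
  funext fun i => (FiniteField.frobeniusAlgHom Fq Fqm).commutes (w i)

variable (Fq Fqm) in
theorem frobeniusAlgHom_surjective [PerfectField Fqm] :
    Function.Surjective (FiniteField.frobeniusAlgHom Fq Fqm) := by
  obtain ⟨p, _⟩ := ExpChar.exists Fqm
  exact (FiniteField.frobeniusAlgEquiv Fq Fqm p).surjective

variable {n : ℕ}

theorem isGalClosed_rationalSpan [PerfectField Fqm] (W : Submodule Fq (Fin n → Fq)) :
    IsGalClosed (Fintype.card Fq) (rationalSpan Fqm W) := by
  have : RingHomSurjective (FiniteField.frobeniusAlgHom Fq Fqm : Fqm →+* Fqm) :=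
    ⟨frobeniusAlgHom_surjective Fq Fqm⟩
  have hmap : (rationalSpan Fqm W).map (coordFrobenius Fq Fqm (Fin n)) = rationalSpan Fqm W := by
    simp only [rationalSpan, Submodule.map_span, Set.image_image, coordFrobenius_algebraMap_comp]
  exact congrArg SetLike.coe hmap

theorem IsGalClosed.exists_rationalSpan_eq {V : Submodule Fqm (Fin n → Fqm)}
    (hV : IsGalClosed (Fintype.card Fq) V) :
    ∃ W : Submodule Fq (Fin n → Fq), rationalSpan Fqm W = V := by
  classical
  let W := (V.restrictScalars Fq).comap (Pi.algebraMap (Fin n) Fq Fqm)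
  obtain ⟨s, b, hb⟩ := exists_basis_repr_eq_apply V
  -- The coefficients of a vector in the basis `b` are among its entries, so those of `(b j)^q` are
  -- `q`-th powers of `0` and `1`: the vectors `(b j)^q` and `b j` have the same coefficients.
  have hb_frob (j : s) (i : Fin n) :
      (b j : Fin n → Fqm) i ^ Fintype.card Fq = (b j : Fin n → Fqm) i := by
    have hmem : coordFrobenius Fq Fqm (Fin n) (b j) ∈ V := hV.subset ⟨b j, (b j).2, rfl⟩
    have hentry (l : s) : (b j : Fin n → Fqm) l = if j = l then 1 else 0 := by
      rw [← hb, b.repr_self, Finsupp.single_apply]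
    have heq : (⟨_, hmem⟩ : V) = b j := by
      refine b.ext_elem fun l => ?_
      rw [hb, hb]
      change (b j : Fin n → Fqm) l ^ Fintype.card Fq = _
      rw [hentry]
      split_ifs
      · exact one_pow _
      · exact zero_pow Fintype.card_ne_zero
    exact congrFun (congrArg Subtype.val heq) i
  have hb_mem (j : s) : (b j : Fin n → Fqm) ∈ rationalSpan Fqm W := by
    choose w hw using fun i => mem_range_algebraMap_of_pow_card_eq_self (hb_frob j i)
    have hw' : algebraMap Fq Fqm ∘ w = b j := funext hw
    rw [← hw']
    refine algebraMap_comp_mem_rationalSpan (W := W) (?_ : algebraMap Fq Fqm ∘ w ∈ V)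
    exact hw' ▸ (b j).2
  refine ⟨W, le_antisymm (Submodule.span_le.mpr ?_) ?_⟩
  · rintro _ ⟨w, hw, rfl⟩
    exact hw
  · rw [← Submodule.map_subtype_top V, ← b.span_eq, Submodule.map_span, Submodule.span_le]
    rintro _ ⟨_, ⟨j, rfl⟩, rfl⟩
    exact hb_mem j

end GaloisDescent

section RGRW

variable {Fq} [Fintype Fq] [PerfectField Fqm] {n i : ℕ}
variable {C C1 C2 : Submodule Fqm (Fin n → Fqm)}

theorem RGRW_le_finrank {W : Submodule Fq (Fin n → Fq)}
    (hi : i ≤ Module.finrank Fqm ↥(C1 ⊓ rationalSpan Fqm W) -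
      Module.finrank Fqm ↥(C2 ⊓ rationalSpan Fqm W)) :
    RGRW (Fintype.card Fq) C1 C2 i ≤ Module.finrank Fq W :=
  Nat.sInf_le ⟨_, isGalClosed_rationalSpan W, (finrank_rationalSpan W).symm, hi⟩

theorem RGRW_le_length (hi : i ≤ Module.finrank Fqm C1 - Module.finrank Fqm C2) :
    RGRW (Fintype.card Fq) C1 C2 i ≤ n := by
  have hle := RGRW_le_finrank (Fq := Fq) (C1 := C1) (C2 := C2) (i := i) (W := ⊤)
    (by rwa [rationalSpan_top, inf_top_eq, inf_top_eq])
  rwa [finrank_top, Module.finrank_fin_fun] at hle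

variable (Fq) in
theorem exists_finrank_eq_RGRW (hi : i ≤ Module.finrank Fqm C1 - Module.finrank Fqm C2) :
    ∃ W : Submodule Fq (Fin n → Fq),
      Module.finrank Fq W = RGRW (Fintype.card Fq) C1 C2 i ∧
      i ≤ Module.finrank Fqm ↥(C1 ⊓ rationalSpan Fqm W) -
        Module.finrank Fqm ↥(C2 ⊓ rationalSpan Fqm W) := by
  have htop := isGalClosed_rationalSpan (Fqm := Fqm) (⊤ : Submodule Fq (Fin n → Fq))
  rw [rationalSpan_top] at htop
  obtain ⟨V, hV, hdim, hiV⟩ := Nat.sInf_mem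
    (s := {d : ℕ | ∃ V : Submodule Fqm (Fin n → Fqm), IsGalClosed (Fintype.card Fq) V ∧
      d = Module.finrank Fqm V ∧
      i ≤ Module.finrank Fqm ↥(C1 ⊓ V) - Module.finrank Fqm ↥(C2 ⊓ V)})
    ⟨_, ⊤, htop, rfl, by rwa [inf_top_eq, inf_top_eq]⟩
  obtain ⟨W, rfl⟩ := hV.exists_rationalSpan_eq
  exact ⟨W, (finrank_rationalSpan W).symm.trans hdim.symm, hiV⟩

theorem RGRW_add_le_RGRW_add {j : ℕ}
    (hij : i + j ≤ Module.finrank Fqm C1 - Module.finrank Fqm C2) :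
    RGRW (Fintype.card Fq) C1 C2 i + j ≤ RGRW (Fintype.card Fq) C1 C2 (i + j) := by
  obtain ⟨W, hW, hijW⟩ := exists_finrank_eq_RGRW Fq hij
  have hjW : i + j ≤ Module.finrank Fq W := by
    rw [← finrank_rationalSpan (Fqm := Fqm) W]
    exact (hijW.trans (Nat.sub_le _ _)).trans (Submodule.finrank_mono inf_le_right)
  obtain ⟨W', hW'W, hW'⟩ :=
    exists_submodule_le_finrank_eq (Nat.sub_le (Module.finrank Fq W) j)
  have hspan := rationalSpan_mono (Fqm := Fqm) hW'W
  have hC1 := finrank_inf_add_finrank_le_of_le C1 hspan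
  have hC2 := Submodule.finrank_mono (inf_le_inf_left C2 hspan)
  rw [finrank_rationalSpan, finrank_rationalSpan] at hC1
  have hle : RGRW (Fintype.card Fq) C1 C2 i ≤ Module.finrank Fq W' := RGRW_le_finrank (by omega)
  omega

theorem RGRW_bot_le (hi : i ≤ Module.finrank Fqm C) :
    RGRW (Fintype.card Fq) C ⊥ i ≤ n - Module.finrank Fqm C + i := by
  obtain ⟨j, hj⟩ := Nat.exists_eq_add_of_le hi
  have hstep : RGRW (Fintype.card Fq) C ⊥ i + j ≤ RGRW (Fintype.card Fq) C ⊥ (i + j) :=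
    RGRW_add_le_RGRW_add (by rw [finrank_bot, Nat.sub_zero, hj])
  have hlength : RGRW (Fintype.card Fq) C ⊥ (i + j) ≤ n :=
    RGRW_le_length (by rw [finrank_bot, Nat.sub_zero, hj])
  omega

theorem RGRW_bot_one (hC : C ≠ ⊥) : RGRW (Fintype.card Fq) C ⊥ 1 = minRankDist Fq C := by
  apply le_antisymm
  · obtain ⟨x, hx, hx0, hmin⟩ := exists_rankWeight_eq_minRankDist Fq hC
    obtain ⟨W, hxW, hW⟩ := exists_mem_rationalSpan_finrank_le_rankWeight (Fq := Fq) x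
    have hne : C ⊓ rationalSpan Fqm W ≠ ⊥ := (Submodule.ne_bot_iff _).mpr ⟨x, ⟨hx, hxW⟩, hx0⟩
    rw [← hmin]
    refine (RGRW_le_finrank ?_).trans hW
    rwa [bot_inf_eq, finrank_bot, Nat.sub_zero, Submodule.one_le_finrank_iff]
  · obtain ⟨W, hW, hdim⟩ := exists_finrank_eq_RGRW Fq (i := 1) (C1 := C) (C2 := ⊥)
      (by rwa [finrank_bot, Nat.sub_zero, Submodule.one_le_finrank_iff])
    rw [bot_inf_eq, finrank_bot, Nat.sub_zero, Submodule.one_le_finrank_iff] at hdim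
    obtain ⟨x, hx, hx0⟩ := Submodule.exists_mem_ne_zero_of_ne_bot hdim
    exact hW ▸ (minRankDist_le_rankWeight hx.1 hx0).trans
      (rankWeight_le_finrank_of_mem_rationalSpan hx.2)

end RGRW

theorem stmt7_general (n : ℕ) [Fintype Fq] [PerfectField Fqm] (hq : Fintype.card Fq = q)
    (C : Submodule Fqm (Fin n → Fqm)) (hC : C ≠ ⊥) :
    (∀ i, 1 ≤ i → i ≤ Module.finrank Fqm ↥C →
      RGRW q C ⊥ i ≤ (n - Module.finrank Fqm ↥C) + i) ∧
    ((∀ i, 1 ≤ i → i ≤ Module.finrank Fqm ↥C →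
        RGRW q C ⊥ i = (n - Module.finrank Fqm ↥C) + i) ↔
      minRankDist Fq C = n - Module.finrank Fqm ↥C + 1) := by
  subst hq
  refine ⟨fun i _ hi => RGRW_bot_le hi, fun h => ?_, fun h i h1 hi => ?_⟩
  · rw [← RGRW_bot_one hC]
    exact h 1 le_rfl (Submodule.one_le_finrank_iff.mpr hC)
  · obtain ⟨j, rfl⟩ := Nat.exists_eq_add_of_le h1
    refine (RGRW_bot_le hi).antisymm ?_
    calc n - Module.finrank Fqm C + (1 + j) = RGRW (Fintype.card Fq) C ⊥ 1 + j := by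
          rw [RGRW_bot_one hC, h, add_assoc]
      _ ≤ RGRW (Fintype.card Fq) C ⊥ (1 + j) :=
          RGRW_add_le_RGRW_add (by rwa [finrank_bot, Nat.sub_zero])

/-- Let `m ≥ n` and `C ⊆ F_{q^m}^n` a nonzero linear code. Then
`M_{R,i}(C,{0}) ≤ (n - dim C) + i` for all `1 ≤ i ≤ dim C`, with equality for all
such `i` if and only if `C` is MRD, i.e. `d_R(C) = n - dim C + 1`. -/
theorem stmt7 (m n : ℕ) [Fintype Fq] [Fintype Fqm]
    (hq : Fintype.card Fq = q) (hm : Module.finrank Fq Fqm = m) (hmn : n ≤ m)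
    (C : Submodule Fqm (Fin n → Fqm)) (hC : C ≠ ⊥) :
    (∀ i, 1 ≤ i → i ≤ Module.finrank Fqm ↥C →
      RGRW q C ⊥ i ≤ (n - Module.finrank Fqm ↥C) + i) ∧
    ((∀ i, 1 ≤ i → i ≤ Module.finrank Fqm ↥C →
        RGRW q C ⊥ i = (n - Module.finrank Fqm ↥C) + i) ↔
      minRankDist Fq C = n - Module.finrank Fqm ↥C + 1) :=
  stmt7_general q Fq n hq C hC

end
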